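/- Let δ > 0 and let α, β : (0,1) → ℝ be functions with β(ε) − α(ε) ≥ ε^{1/2−δ} for all ε ∈ (0,1). Let R_ε(α,β) = {x ∈ [α(ε), β(ε)] : there exist integers a and q ≥ 1 with gcd(a,q) = 1 such that (x − a/q)² + (ε − 1/(2q²))² ≤ 1/(4q⁴)}. Then the Lebesgue measure of R_ε(α,β) divided by β(ε) − α(ε) tends to 3/π as ε → 0⁺. -/

import Mathlib

open MeasureTheory

/-- The set of points of the horizontal segment `[α(ε), β(ε)]` at height `ε` lying inside some
Ford disk. -/
def fordSetAB (α β : ℝ → ℝ) (ε : ℝ) : Set ℝ :=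
  {x | x ∈ Set.Icc (α ε) (β ε) ∧ ∃ a q : ℤ, 1 ≤ q ∧ Int.gcd a q = 1 ∧
    (x - (a : ℝ) / q) ^ 2 + (ε - 1 / (2 * (q : ℝ) ^ 2)) ^ 2 ≤ 1 / (4 * (q : ℝ) ^ 4)}


/-- half-width of the Ford disk of denominator `q` at height `ε` -/
noncomputable def hw (ε : ℝ) (q : ℕ) : ℝ := √(ε * (1 / (q : ℝ) ^ 2 - ε))

/-- integers `a` with `a/k ∈ [A,B]` -/
noncomputable def cS (A B : ℝ) (k : ℕ) : Finset ℤ := Finset.Icc ⌈(k : ℝ) * A⌉ ⌊(k : ℝ) * B⌋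

/-- those coprime to `k` -/
noncomputable def cop (A B : ℝ) (k : ℕ) : Finset ℤ := (cS A B k).filter (fun a => Int.gcd a k = 1)

/-- cutoff -/
noncomputable def NN (ε : ℝ) : ℕ := ⌈1 / ε⌉₊

lemma mem_cS {A B : ℝ} {k : ℕ} {a : ℤ} : a ∈ cS A B k ↔ (k : ℝ) * A ≤ a ∧ (a : ℝ) ≤ k * B := by
  simp [cS, Int.ceil_le, Int.le_floor]

lemma mem_cop {A B : ℝ} {k : ℕ} {a : ℤ} :
    a ∈ cop A B k ↔ ((k : ℝ) * A ≤ a ∧ (a : ℝ) ≤ k * B) ∧ Int.gcd a k = 1 := by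
  simp [cop, mem_cS]

lemma mem_cS_mul {A B : ℝ} {g k : ℕ} (hg : 0 < g) {a : ℤ} :
    (g : ℤ) * a ∈ cS A B (g * k) ↔ a ∈ cS A B k := by
  have : (0:ℝ) < g := by exact_mod_cast hg
  rw [mem_cS, mem_cS]
  push_cast
  rw [mul_assoc, mul_assoc, mul_le_mul_iff_right₀ this, mul_le_mul_iff_right₀ this]

lemma card_cS (A B : ℝ) (n : ℕ) (hn : 0 < n) :
    ∑ d ∈ n.divisors, (cop A B d).card = (cS A B n).card := by
  rw [← Finset.card_sigma]
  refine Finset.card_bij (fun x _ => ((n / x.1 : ℕ) : ℤ) * x.2) ?_ ?_ ?_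
  · rintro ⟨d, b⟩ h
    simp only [Finset.mem_sigma, Nat.mem_divisors] at h
    obtain ⟨⟨⟨e, rfl⟩, h0⟩, hb⟩ := h
    have hd : 0 < d := Nat.pos_of_ne_zero (by rintro rfl; simp at h0)
    have he : 0 < e := Nat.pos_of_ne_zero (by rintro rfl; simp at h0)
    simp only [Nat.mul_div_cancel_left _ hd]
    rw [mul_comm d e, mem_cS_mul he]
    exact (Finset.mem_filter.1 hb).1
  · rintro ⟨d, b⟩ h ⟨d', b'⟩ h' heq
    simp only [Finset.mem_sigma, Nat.mem_divisors, mem_cop] at h h'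
    obtain ⟨⟨⟨e, rfl⟩, h0⟩, _, hb⟩ := h
    obtain ⟨⟨⟨e', he'⟩, _⟩, _, hb'⟩ := h'
    have hd : 0 < d := Nat.pos_of_ne_zero (by rintro rfl; simp at h0)
    have hd' : 0 < d' := Nat.pos_of_ne_zero (by rintro rfl; exact h0 (by rw [he', zero_mul]))
    have he : 0 < e := Nat.pos_of_ne_zero (by rintro rfl; simp at h0)
    simp only [Nat.mul_div_cancel_left _ hd] at heq
    rw [he', Nat.mul_div_cancel_left _ hd'] at heq
    have g1 : Int.gcd ((e : ℤ) * b) ((e:ℤ) * d) = e := by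
      rw [Int.gcd_mul_left, hb]; simp
    have g2 : Int.gcd ((e' : ℤ) * b') ((e':ℤ) * d') = e' := by
      rw [Int.gcd_mul_left, hb']; simp
    have : (e : ℤ) * d = e' * d' := by exact_mod_cast (by linarith [mul_comm d e, mul_comm d' e'] : e * d = e' * d')
    rw [heq, this, g2] at g1
    subst g1
    have e1 : d = d' := by
      have := Nat.eq_of_mul_eq_mul_right he he'
      exact this
    have e2 : b = b' := by
      have : (e' : ℤ) ≠ 0 := by exact_mod_cast he.ne'
      exact mul_left_cancel₀ this heq
    subst e1 e2; rfl
  · intro a ha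
    have hg : 0 < Int.gcd a n := Int.gcd_pos_of_ne_zero_right _ (by exact_mod_cast hn.ne')
    set g := Int.gcd a n with hgdef
    obtain ⟨b, hb⟩ : (g : ℤ) ∣ a := Int.gcd_dvd_left ..
    obtain ⟨d, hd⟩ : g ∣ n := by
      have : (g : ℤ) ∣ n := Int.gcd_dvd_right ..
      exact_mod_cast this
    have hd0 : 0 < d := Nat.pos_of_ne_zero (by rintro rfl; simp at hd; omega)
    refine ⟨⟨d, b⟩, ?_, ?_⟩
    · simp only [Finset.mem_sigma, Nat.mem_divisors, cop, Finset.mem_filter]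
      refine ⟨⟨⟨g, by rw [hd, mul_comm]⟩, hn.ne'⟩, ?_, ?_⟩
      · rw [← mem_cS_mul hg, ← hb, ← hd]; exact ha
      · have : g * Int.gcd b d = g := by
          conv_rhs => rw [hgdef, hb, hd]
          push_cast
          rw [Int.gcd_mul_left]; simp
        exact Nat.eq_of_mul_eq_mul_left hg (by simpa using this)
    · simp only
      rw [hd, Nat.mul_div_cancel _ hd0, hb]

lemma cop_moebius (A B : ℝ) (n : ℕ) (hn : 0 < n) :
    ∑ x ∈ n.divisorsAntidiagonal, (ArithmeticFunction.moebius x.1 : ℝ) * ((cS A B x.2).card : ℝ)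
      = ((cop A B n).card : ℝ) := by
  refine (ArithmeticFunction.sum_eq_iff_sum_mul_moebius_eq
    (f := fun n => ((cop A B n).card : ℝ)) (g := fun n => ((cS A B n).card : ℝ))).1 ?_ n hn
  intro m hm
  exact_mod_cast card_cS A B m hm

lemma card_cS_bound (A B : ℝ) (hAB : A ≤ B) (k : ℕ) :
    |((cS A B k).card : ℝ) - k * (B - A)| ≤ 1 := by
  have hk : (0:ℝ) ≤ k := by positivity
  have h0 : (k:ℝ) * A ≤ k * B := by gcongr
  have h1 := Int.ceil_lt_add_one ((k:ℝ) * A)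
  have h2 := Int.lt_floor_add_one ((k:ℝ) * B)
  have h3 := Int.le_ceil ((k:ℝ) * A)
  have h4 := Int.floor_le ((k:ℝ) * B)
  have h5 : (0:ℤ) ≤ ⌊(k : ℝ) * B⌋ + 1 - ⌈(k : ℝ) * A⌉ := by
    have : ((⌈(k : ℝ) * A⌉ : ℤ) : ℝ) < ((⌊(k : ℝ) * B⌋ + 2 : ℤ) : ℝ) := by push_cast; linarith
    have := Int.cast_lt.1 this
    omega
  have h6 : ((cS A B k).card : ℝ) = ⌊(k : ℝ) * B⌋ + 1 - ⌈(k : ℝ) * A⌉ := by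
    have : ((cS A B k).card : ℤ) = ⌊(k : ℝ) * B⌋ + 1 - ⌈(k : ℝ) * A⌉ := by
      rw [cS, Int.card_Icc, Int.toNat_of_nonneg h5]
    exact_mod_cast this
  rw [h6, abs_le]
  constructor <;> linarith

lemma NN_ge {ε : ℝ} : 1 / ε ≤ NN ε := Nat.le_ceil _

lemma hw_nonneg (ε : ℝ) (q : ℕ) : 0 ≤ hw ε q := Real.sqrt_nonneg _

lemma hw_eq_zero {ε : ℝ} (h0 : 0 < ε) (h1 : ε < 1) {q : ℕ} (hq : NN ε < q) : hw ε q = 0 := by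
  have h : (1:ℝ) / ε < q := lt_of_le_of_lt NN_ge (by exact_mod_cast hq)
  have hq0 : (0:ℝ) < q := lt_trans (by positivity) h
  apply Real.sqrt_eq_zero_of_nonpos
  apply mul_nonpos_of_nonneg_of_nonpos h0.le
  rw [div_lt_iff₀ h0] at h
  rw [sub_nonpos, div_le_iff₀ (by positivity)]
  nlinarith

lemma hw_le {ε : ℝ} (h0 : 0 < ε) (q : ℕ) : hw ε q ≤ √ε / q := by
  rw [hw, Real.sqrt_mul h0.le, div_eq_mul_one_div (√ε)]
  gcongr
  apply Real.sqrt_le_iff.2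
  refine ⟨by positivity, ?_⟩
  rw [div_pow, one_pow]; linarith

/-- total length -/
noncomputable def SS (ε A B : ℝ) : ℝ := ∑ q ∈ Finset.Ioc 0 (NN ε), 2 * hw ε q * (cop A B q).card

noncomputable def MM (ε : ℝ) : ℝ :=
  ∑ d ∈ Finset.Ioc 0 (NN ε), ∑ k ∈ Finset.Ioc 0 (NN ε),
    2 * hw ε (d * k) * ((ArithmeticFunction.moebius d : ℝ) * k)

lemma SS_eq {ε : ℝ} (h0 : 0 < ε) (h1 : ε < 1) (A B : ℝ) : SS ε A B =
    ∑ d ∈ Finset.Ioc 0 (NN ε), ∑ k ∈ Finset.Ioc 0 (NN ε),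
      2 * hw ε (d * k) * ((ArithmeticFunction.moebius d : ℝ) * (cS A B k).card) := by
  rw [← Finset.sum_product', SS]
  have : ∀ q ∈ Finset.Ioc 0 (NN ε), 2 * hw ε q * ((cop A B q).card : ℝ) =
      ∑ x ∈ Finset.Ioc 0 (NN ε) ×ˢ Finset.Ioc 0 (NN ε), if x.1 * x.2 = q then
        2 * hw ε (x.1 * x.2) * ((ArithmeticFunction.moebius x.1 : ℝ) * (cS A B x.2).card) else 0 := by
    intro q hq
    rw [Finset.mem_Ioc] at hq
    rw [← cop_moebius A B q hq.1, Finset.mul_sum, ← Finset.sum_filter,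
      Nat.divisorsAntidiagonal_eq_prod_filter_of_le hq.1.ne' hq.2]
    refine Finset.sum_congr rfl fun x hx => ?_
    rw [(Finset.mem_filter.1 hx).2]
  rw [Finset.sum_congr rfl this, Finset.sum_comm]
  refine Finset.sum_congr rfl fun x hx => ?_
  rw [Finset.sum_ite_eq]
  split_ifs with h
  · rfl
  · simp only [Finset.mem_product, Finset.mem_Ioc] at hx h
    rw [hw_eq_zero h0 h1]
    · simp
    · by_contra hc
      exact h ⟨Nat.mul_pos hx.1.1 hx.2.1, by omega⟩

lemma moebius_abs_le (d : ℕ) : |(ArithmeticFunction.moebius d : ℝ)| ≤ 1 := by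
  exact_mod_cast ArithmeticFunction.abs_moebius_le_one

lemma harm (N : ℕ) : ∑ k ∈ Finset.Ioc 0 N, (1:ℝ) / k ≤ 1 + Real.log N := by
  refine le_trans (le_of_eq ?_) (harmonic_le_one_add_log N)
  rw [harmonic_eq_sum_Icc]
  push_cast
  exact Finset.sum_congr rfl (fun x _ => by simp)

lemma logNN {ε : ℝ} (h0 : 0 < ε) (h1 : ε < 1) : 1 + Real.log (NN ε) ≤ 2 - Real.log ε := by
  have h2 : (NN ε : ℝ) ≤ 2 / ε := by
    have := (Nat.ceil_lt_add_one (a := 1 / ε) (by positivity)).le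
    have h3 : 1 ≤ 1 / ε := by rw [le_div_iff₀ h0]; linarith
    unfold NN
    have : 2 / ε = 1 / ε + 1 / ε := by ring
    linarith
  have h3 : (0:ℝ) < NN ε := lt_of_lt_of_le (by positivity) NN_ge
  have := Real.log_le_log h3 h2
  rw [Real.log_div (by norm_num) h0.ne'] at this
  linarith [Real.log_two_lt_d9]

lemma SS_bound {ε : ℝ} (h0 : 0 < ε) (h1 : ε < 1) {A B : ℝ} (hAB : A ≤ B) :
    |SS ε A B - MM ε * (B - A)| ≤ 2 * √ε * (2 - Real.log ε) ^ 2 := by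
  rw [SS_eq h0 h1, MM, Finset.sum_mul, ← Finset.sum_sub_distrib]
  have step : ∀ d ∈ Finset.Ioc 0 (NN ε), |∑ k ∈ Finset.Ioc 0 (NN ε),
      2 * hw ε (d * k) * ((ArithmeticFunction.moebius d : ℝ) * (cS A B k).card) -
      (∑ k ∈ Finset.Ioc 0 (NN ε),
        2 * hw ε (d * k) * ((ArithmeticFunction.moebius d : ℝ) * k)) * (B - A)| ≤
      ∑ k ∈ Finset.Ioc 0 (NN ε), 2 * √ε * (1 / d * (1 / k)) := by
    intro d _
    rw [Finset.sum_mul, ← Finset.sum_sub_distrib]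
    refine (Finset.abs_sum_le_sum_abs _ _).trans (Finset.sum_le_sum fun k _ => ?_)
    have e : 2 * hw ε (d * k) * ((ArithmeticFunction.moebius d : ℝ) * (cS A B k).card) -
      2 * hw ε (d * k) * ((ArithmeticFunction.moebius d : ℝ) * k) * (B - A) =
      2 * hw ε (d * k) * ((ArithmeticFunction.moebius d : ℝ) *
        ((cS A B k).card - k * (B - A))) := by ring
    have hh := hw_le h0 (d * k)
    have hn := hw_nonneg ε (d * k)
    rw [e, abs_mul (2 * hw ε (d * k)), abs_mul (ArithmeticFunction.moebius d : ℝ),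
      abs_of_nonneg (mul_nonneg zero_le_two hn)]
    have h3 : |(ArithmeticFunction.moebius d : ℝ)| * |((cS A B k).card : ℝ) - k * (B - A)| ≤ 1 :=
      mul_le_one₀ (moebius_abs_le d) (abs_nonneg _) (card_cS_bound A B hAB k)
    calc _ ≤ 2 * hw ε (d * k) * 1 := by gcongr
      _ ≤ 2 * (√ε / ((d * k : ℕ) : ℝ)) := by linarith
      _ = _ := by push_cast; rw [div_mul_div_comm, one_mul]; ring
  refine (Finset.abs_sum_le_sum_abs _ _).trans ((Finset.sum_le_sum step).trans ?_)
  simp_rw [← Finset.mul_sum]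
  rw [← Finset.sum_mul, ← sq]
  have := (harm (NN ε)).trans (logNN h0 h1)
  have h5 : 0 ≤ ∑ k ∈ Finset.Ioc 0 (NN ε), (1:ℝ) / k := Finset.sum_nonneg fun _ _ => by positivity
  gcongr

lemma hw_add_le {ε : ℝ} (h0 : 0 < ε) {q r : ℕ} (hq : 0 < q) (hr : 0 < r)
    (h1 : ε ≤ 1 / (q : ℝ) ^ 2) (h2 : ε ≤ 1 / (r : ℝ) ^ 2) :
    hw ε q + hw ε r ≤ 1 / (q * r) := by
  have hq' : (0:ℝ) < q := by exact_mod_cast hq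
  have hr' : (0:ℝ) < r := by exact_mod_cast hr
  set u : ℝ := 1 / q with hu
  set v : ℝ := 1 / r with hv
  have hu0 : 0 < u := by positivity
  have hv0 : 0 < v := by positivity
  have e1 : 1 / (q:ℝ) ^ 2 = u ^ 2 := by rw [hu, div_pow, one_pow]
  have e2 : 1 / (r:ℝ) ^ 2 = v ^ 2 := by rw [hv, div_pow, one_pow]
  have e3 : 1 / ((q:ℝ) * r) = u * v := by rw [hu, hv, div_mul_div_comm, one_mul]
  unfold hw
  rw [e1] at h1
  rw [e2] at h2
  rw [e1, e2, e3, Real.sqrt_mul h0.le, Real.sqrt_mul h0.le]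
  have s0 := Real.sq_sqrt h0.le
  have s1 := Real.sq_sqrt (sub_nonneg.2 h1)
  have s2 := Real.sq_sqrt (sub_nonneg.2 h2)
  set x := √ε
  set y := √(u ^ 2 - ε)
  set z := √(v ^ 2 - ε)
  apply le_of_sq_le_sq _ (by positivity : 0 ≤ u * v)
  have : (u * v) ^ 2 = (x ^ 2 + y ^ 2) * (z ^ 2 + x ^ 2) := by
    rw [s0, s1, s2]; ring
  rw [this]
  nlinarith [sq_nonneg (x * x - y * z)]

lemma hw_pos_imp {ε : ℝ} (h0 : 0 < ε) {q : ℕ} (h : 0 < hw ε q) : ε < 1 / (q : ℝ) ^ 2 := by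
  have := Real.sqrt_pos.1 h
  have := (mul_pos_iff_of_pos_left h0).1 this
  linarith

/-- index set -/
noncomputable def PP (ε A B : ℝ) : Finset (Σ _ : ℕ, ℤ) :=
  (Finset.Ioc 0 (NN ε)).sigma (fun q => cop A B q)

lemma SS_PP (ε A B : ℝ) : SS ε A B = ∑ p ∈ PP ε A B, 2 * hw ε p.1 := by
  rw [PP, Finset.sum_sigma, SS]
  refine Finset.sum_congr rfl fun q _ => ?_
  simp [mul_comm]

lemma alg_iff {ε : ℝ} {x c q : ℝ} (hq : 0 < q) :
    (x - c) ^ 2 + (ε - 1 / (2 * q ^ 2)) ^ 2 ≤ 1 / (4 * q ^ 4) ↔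
      (x - c) ^ 2 ≤ ε * (1 / q ^ 2 - ε) := by
  have : (ε - 1 / (2 * q ^ 2)) ^ 2 = 1 / (4 * q ^ 4) - ε * (1 / q ^ 2 - ε) := by
    field_simp; ring
  rw [this]
  constructor <;> intro h <;> linarith

lemma upper {ε : ℝ} (h0 : 0 < ε) (h1 : ε < 1) (α β : ℝ → ℝ) :
    (volume (fordSetAB α β ε)).toReal ≤ SS ε (α ε - √ε) (β ε + √ε) := by
  have hsub : fordSetAB α β ε ⊆ ⋃ p ∈ PP ε (α ε - √ε) (β ε + √ε),
      Set.Icc ((p.2 : ℝ) / p.1 - hw ε p.1) ((p.2 : ℝ) / p.1 + hw ε p.1) := by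
    rintro x ⟨hx, a, q, hq, hg, h⟩
    obtain ⟨n, rfl⟩ := Int.eq_ofNat_of_zero_le (by omega : 0 ≤ q)
    have hn : 0 < n := by omega
    have hn' : (0:ℝ) < n := by exact_mod_cast hn
    simp only [Int.cast_natCast] at h
    rw [alg_iff hn'] at h
    have hab := Real.abs_le_sqrt h
    change |x - a / n| ≤ hw ε n at hab
    have hle := hw_le h0 n
    have hle2 : √ε / n ≤ √ε := div_le_self (Real.sqrt_nonneg _) (by exact_mod_cast hn)
    rw [abs_le] at hab
    have hc : (α ε - √ε) ≤ a / n ∧ (a:ℝ) / n ≤ β ε + √ε := by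
      constructor <;> linarith [hx.1, hx.2]
    rw [le_div_iff₀ hn', div_le_iff₀ hn'] at hc
    have hN : n ≤ NN ε := by
      by_contra hc
      have h3 : (1:ℝ) / ε < n := lt_of_le_of_lt NN_ge (by exact_mod_cast not_le.1 hc)
      have h4 : 0 ≤ ε * (1 / (n:ℝ) ^ 2 - ε) := (sq_nonneg _).trans h
      have h5 := nonneg_of_mul_nonneg_right h4 h0
      rw [sub_nonneg, le_div_iff₀ (by positivity)] at h5
      rw [div_lt_iff₀ h0] at h3
      have h6 : (1:ℝ) ≤ n := by exact_mod_cast hn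
      nlinarith
    refine Set.mem_iUnion₂.2 ⟨⟨n, a⟩, ?_, ?_⟩
    · simp only [PP, Finset.mem_sigma, Finset.mem_Ioc, mem_cop]
      exact ⟨⟨hn, hN⟩, ⟨by linarith [hc.1], by linarith [hc.2]⟩, hg⟩
    · constructor <;> simp only <;> linarith
  have hv := (measure_mono (μ := volume) hsub).trans (measure_biUnion_finset_le _ _)
  rw [SS_PP]
  apply ENNReal.toReal_le_of_le_ofReal
  · exact Finset.sum_nonneg fun p _ => by have := hw_nonneg ε p.1; positivity
  refine hv.trans (le_of_eq ?_)
  rw [ENNReal.ofReal_sum_of_nonneg (fun p _ => by have := hw_nonneg ε p.1; positivity)]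
  refine Finset.sum_congr rfl fun p _ => ?_
  rw [Real.volume_Icc]
  congr 1; ring

lemma lower {ε : ℝ} (h0 : 0 < ε) (α β : ℝ → ℝ) :
    SS ε (α ε + √ε) (β ε - √ε) ≤ (volume (fordSetAB α β ε)).toReal := by
  have hsub : (⋃ p ∈ PP ε (α ε + √ε) (β ε - √ε),
      Set.Ioo ((p.2 : ℝ) / p.1 - hw ε p.1) ((p.2 : ℝ) / p.1 + hw ε p.1)) ⊆ fordSetAB α β ε := by
    intro x hx
    obtain ⟨⟨n, a⟩, hp, hx⟩ := Set.mem_iUnion₂.1 hx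
    simp only [PP, Finset.mem_sigma, Finset.mem_Ioc, mem_cop] at hp
    obtain ⟨⟨hn, hN⟩, ⟨hc1, hc2⟩, hg⟩ := hp
    simp only [Set.mem_Ioo] at hx
    have hn' : (0:ℝ) < n := by exact_mod_cast hn
    have hpos : 0 < hw ε n := by linarith
    have hlt := hw_pos_imp h0 hpos
    have hle := hw_le h0 n
    have hle2 : √ε / n ≤ √ε := div_le_self (Real.sqrt_nonneg _) (by exact_mod_cast hn)
    have hc1' : α ε + √ε ≤ a / n := by rw [le_div_iff₀ hn']; linarith
    have hc2' : a / n ≤ β ε - √ε := by rw [div_le_iff₀ hn']; linarith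
    refine ⟨⟨by linarith, by linarith⟩, a, n, by omega, hg, ?_⟩
    simp only [Int.cast_natCast]
    rw [alg_iff hn', ← Real.sq_sqrt (mul_nonneg h0.le (sub_nonneg.2 hlt.le)), sq_le_sq]
    change |_| ≤ |hw ε n|
    rw [abs_of_pos hpos, abs_le]
    constructor <;> linarith
  have hd : ((PP ε (α ε + √ε) (β ε - √ε) : Finset _) : Set (Σ _ : ℕ, ℤ)).PairwiseDisjoint
      (fun p => Set.Ioo ((p.2 : ℝ) / p.1 - hw ε p.1) ((p.2 : ℝ) / p.1 + hw ε p.1)) := by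
    rintro ⟨n, a⟩ hp ⟨m, b⟩ hp' hne
    simp only [PP, Finset.mem_coe, Finset.mem_sigma, Finset.mem_Ioc, mem_cop] at hp hp'
    obtain ⟨⟨hn, -⟩, -, hg⟩ := hp
    obtain ⟨⟨hm, -⟩, -, hg'⟩ := hp'
    rw [Function.onFun, Set.disjoint_left]
    intro x hx hx'
    simp only [Set.mem_Ioo] at hx hx'
    have hn' : (0:ℝ) < n := by exact_mod_cast hn
    have hm' : (0:ℝ) < m := by exact_mod_cast hm
    have l1 := hw_pos_imp h0 (q := n) (by linarith)
    have l2 := hw_pos_imp h0 (q := m) (by linarith)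
    have l3 := hw_add_le h0 hn hm l1.le l2.le
    have l4 : |(a:ℝ) / n - b / m| < 1 / (n * m) := by
      rw [abs_lt]; constructor <;> linarith
    have l5 : (a:ℝ) / n - b / m = (a * m - b * n) / (n * m) := by field_simp
    rw [l5, abs_div, abs_of_pos (mul_pos hn' hm'), div_lt_div_iff_of_pos_right (by positivity)] at l4
    have l6 : |a * m - b * n| < 1 := by exact_mod_cast l4
    have l7 : a * m = b * n := by rw [Int.abs_lt_one_iff] at l6; linarith
    have d1 : (n : ℤ) ∣ m := by
      have : (n : ℤ) ∣ a * m := ⟨b, by rw [l7]; ring⟩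
      exact Int.dvd_of_dvd_mul_right_of_gcd_one this (by rw [Int.gcd_comm]; exact hg)
    have d2 : (m : ℤ) ∣ n := by
      have : (m : ℤ) ∣ b * n := ⟨a, by rw [← l7]; ring⟩
      exact Int.dvd_of_dvd_mul_right_of_gcd_one this (by rw [Int.gcd_comm]; exact hg')
    have e1 : n = m := Nat.dvd_antisymm (by exact_mod_cast d1) (by exact_mod_cast d2)
    subst e1
    have e2 : a = b := mul_right_cancel₀ (by exact_mod_cast hn.ne') l7
    subst e2
    exact hne rfl
  have hv := measure_mono (μ := volume) hsub
  rw [measure_biUnion_finset hd (fun _ _ => measurableSet_Ioo)] at hv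
  have hfin : volume (fordSetAB α β ε) ≠ ⊤ := by
    refine ne_top_of_le_ne_top ?_ (measure_mono (t := Set.Icc (α ε) (β ε)) fun x hx => hx.1)
    simp
  rw [SS_PP]
  rw [← ENNReal.ofReal_le_iff_le_toReal hfin]
  refine le_trans (le_of_eq ?_) hv
  rw [ENNReal.ofReal_sum_of_nonneg (fun p _ => by have := hw_nonneg ε p.1; positivity)]
  refine Finset.sum_congr rfl fun p _ => ?_
  rw [Real.volume_Ioo]
  congr 1; ring

lemma anti_sqrt : AntitoneOn (fun t : ℝ => √(1 - t ^ 2)) (Set.Ici 0) := by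
  intro x hx y hy hxy
  simp only [Set.mem_Ici] at hx hy
  exact Real.sqrt_le_sqrt (by nlinarith)

lemma cont_sqrt : Continuous (fun t : ℝ => √(1 - t ^ 2)) := by fun_prop

lemma int_sqrt {T : ℝ} (hT : 1 ≤ T) : ∫ t in (0:ℝ)..T, √(1 - t ^ 2) = Real.pi / 4 := by
  have i : ∀ a b : ℝ, IntervalIntegrable (fun t : ℝ => √(1 - t ^ 2)) volume a b :=
    fun a b => cont_sqrt.intervalIntegrable a b
  have h1 : ∫ t in (1:ℝ)..T, √(1 - t ^ 2) = 0 := by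
    rw [intervalIntegral.integral_congr (g := fun _ => (0:ℝ))]
    · simp
    · intro t ht
      rw [Set.uIcc_of_le hT] at ht
      exact Real.sqrt_eq_zero_of_nonpos (by nlinarith [ht.1])
  have h2 := integral_sqrt_one_sub_sq
  have h3 : ∫ t in (-1:ℝ)..0, √(1 - t ^ 2) = ∫ t in (0:ℝ)..1, √(1 - t ^ 2) := by
    have := intervalIntegral.integral_comp_neg (a := 0) (b := 1) (fun t : ℝ => √(1 - t ^ 2))
    simp only [neg_sq, neg_zero] at this
    exact this.symm
  rw [← intervalIntegral.integral_add_adjacent_intervals (i (-1) 0) (i 0 1), h3] at h2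
  rw [← intervalIntegral.integral_add_adjacent_intervals (i 0 1) (i 1 T), h1]
  linarith

lemma riem {h : ℝ} (hh : 0 < h) {N : ℕ} (hN : 1 ≤ h * N) :
    Real.pi / 4 - h ≤ ∑ k ∈ Finset.Ioc 0 N, h * √(1 - (h * k) ^ 2) ∧
    ∑ k ∈ Finset.Ioc 0 N, h * √(1 - (h * k) ^ 2) ≤ Real.pi / 4 := by
  have anti : AntitoneOn (fun t : ℝ => √(1 - (h * t) ^ 2)) (Set.Icc 0 (0 + (N:ℝ))) := by
    intro x hx y hy hxy
    exact anti_sqrt (mul_nonneg hh.le hx.1) (mul_nonneg hh.le hy.1) (by gcongr)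
  have hI : h * ∫ t in (0:ℝ)..(0 + N), √(1 - (h * t) ^ 2) = Real.pi / 4 := by
    have := intervalIntegral.mul_integral_comp_mul_left (a := 0) (b := 0 + (N:ℝ)) (c := h)
      (f := fun t : ℝ => √(1 - t ^ 2))
    rw [this, mul_zero, zero_add, int_sqrt hN]
  have h1 := anti.sum_le_integral
  have h2 := anti.integral_le_sum
  simp only [zero_add] at h1 h2 hI
  have hs : ∑ k ∈ Finset.Ioc 0 N, h * √(1 - (h * k) ^ 2) =
      h * ∑ i ∈ Finset.range N, √(1 - (h * ((i + 1 : ℕ) : ℝ)) ^ 2) := by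
    rw [Finset.mul_sum, Finset.range_eq_Ico,
      Finset.sum_Ico_add' (fun k : ℕ => h * √(1 - (h * (k:ℝ)) ^ 2)) 0 N 1]
    rfl
  have hs2 := Finset.sum_range_succ (fun i : ℕ => √(1 - (h * (i:ℝ)) ^ 2)) N
  rw [Finset.sum_range_succ'] at hs2
  simp only [Nat.cast_zero, mul_zero, ne_eq, OfNat.ofNat_ne_zero, not_false_eq_true, zero_pow,
    sub_zero, Real.sqrt_one] at hs2
  have h3 : 0 ≤ √(1 - (h * (N:ℝ)) ^ 2) := Real.sqrt_nonneg _
  rw [hs]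
  constructor
  · have h4 : ∫ t in (0:ℝ)..N, √(1 - (h * t) ^ 2) ≤
      (∑ i ∈ Finset.range N, √(1 - (h * ((i + 1 : ℕ) : ℝ)) ^ 2)) + 1 := by linarith
    have := mul_le_mul_of_nonneg_left h4 hh.le
    linarith
  · have := mul_le_mul_of_nonneg_left h1 hh.le
    linarith

lemma khw {ε : ℝ} (h0 : 0 < ε) {d k : ℕ} (hd : 0 < d) (hk : 0 < k) :
    hw ε (d * k) * k = 1 / (d:ℝ) ^ 2 * (√ε * d * √(1 - (√ε * d * k) ^ 2)) := by
  have hd' : (0:ℝ) < d := by exact_mod_cast hd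
  have hk' : (0:ℝ) < k := by exact_mod_cast hk
  have e : ε * (1 / ((d * k : ℕ) : ℝ) ^ 2 - ε) =
      ε * ((1 / (d * k)) ^ 2 * (1 - (√ε * d * k) ^ 2)) := by
    have : (√ε * d * k) ^ 2 = ε * (d * k) ^ 2 := by
      rw [mul_pow, mul_pow, Real.sq_sqrt h0.le]; ring
    rw [this]; push_cast; field_simp
  rw [hw, e, Real.sqrt_mul h0.le, Real.sqrt_mul (by positivity), Real.sqrt_sq (by positivity)]
  field_simp

noncomputable def FF (ε : ℝ) (d : ℕ) : ℝ :=
  if d ∈ Finset.Ioc 0 (NN ε) then ∑ k ∈ Finset.Ioc 0 (NN ε),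
    2 * hw ε (d * k) * ((ArithmeticFunction.moebius d : ℝ) * k) else 0

lemma MM_tsum (ε : ℝ) : MM ε = ∑' d, FF ε d := by
  rw [tsum_eq_sum (s := Finset.Ioc 0 (NN ε)) (fun d hd => by simp only [FF, if_neg hd])]
  exact Finset.sum_congr rfl fun d hd => by simp only [FF, if_pos hd]

lemma FF_eq {ε : ℝ} (h0 : 0 < ε) {d : ℕ} (hd : d ∈ Finset.Ioc 0 (NN ε)) :
    FF ε d = 2 * (ArithmeticFunction.moebius d : ℝ) / (d:ℝ) ^ 2 *
      ∑ k ∈ Finset.Ioc 0 (NN ε), √ε * d * √(1 - (√ε * d * k) ^ 2) := by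
  rw [FF, if_pos hd, Finset.mul_sum]
  refine Finset.sum_congr rfl fun k hk => ?_
  have := khw h0 (Finset.mem_Ioc.1 hd).1 (Finset.mem_Ioc.1 hk).1
  calc _ = 2 * (ArithmeticFunction.moebius d : ℝ) * (hw ε (d * k) * k) := by ring
    _ = _ := by rw [this]; ring

lemma sqrtNN {ε : ℝ} (h0 : 0 < ε) (h1 : ε < 1) : 1 ≤ √ε * NN ε := by
  have h2 := NN_ge (ε := ε)
  have s := Real.sq_sqrt h0.le
  have sp := Real.sqrt_pos.2 h0
  have s1 : √ε ≤ 1 := Real.sqrt_le_one.2 h1.le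
  calc (1:ℝ) = ε * (1 / ε) := by field_simp
    _ ≤ √ε * (1 / ε) := by gcongr; nlinarith
    _ ≤ _ := by gcongr

lemma riem' {ε : ℝ} (h0 : 0 < ε) (h1 : ε < 1) {d : ℕ} (hd : 0 < d) :
    Real.pi / 4 - √ε * d ≤ ∑ k ∈ Finset.Ioc 0 (NN ε), √ε * d * √(1 - (√ε * d * k) ^ 2) ∧
    ∑ k ∈ Finset.Ioc 0 (NN ε), √ε * d * √(1 - (√ε * d * k) ^ 2) ≤ Real.pi / 4 := by
  have hd' : (1:ℝ) ≤ d := by exact_mod_cast hd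
  have sp := Real.sqrt_pos.2 h0
  apply riem (by positivity)
  have := sqrtNN h0 h1
  calc (1:ℝ) ≤ √ε * NN ε := this
    _ ≤ √ε * NN ε * d := le_mul_of_one_le_right (by positivity) hd'
    _ = _ := by ring

lemma FF_bound {ε : ℝ} (h0 : 0 < ε) (h1 : ε < 1) (d : ℕ) :
    ‖FF ε d‖ ≤ Real.pi / 2 * (1 / (d:ℝ) ^ 2) := by
  have := Real.pi_pos
  by_cases hd : d ∈ Finset.Ioc 0 (NN ε)
  · rw [FF_eq h0 hd, Real.norm_eq_abs, abs_mul]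
    have h2 := (riem' h0 h1 (Finset.mem_Ioc.1 hd).1).2
    have h3 : 0 ≤ ∑ k ∈ Finset.Ioc 0 (NN ε), √ε * d * √(1 - (√ε * d * k) ^ 2) :=
      Finset.sum_nonneg fun k _ => by positivity
    rw [abs_of_nonneg h3]
    have h4 : |2 * (ArithmeticFunction.moebius d : ℝ) / (d:ℝ) ^ 2| ≤ 2 / (d:ℝ) ^ 2 := by
      rw [abs_div, abs_mul, abs_of_nonneg (by positivity : (0:ℝ) ≤ (d:ℝ) ^ 2), abs_two]
      gcongr
      linarith [moebius_abs_le d]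
    calc _ ≤ 2 / (d:ℝ) ^ 2 * (Real.pi / 4) := by gcongr
      _ = _ := by ring
  · rw [FF, if_neg hd]; simp; positivity

lemma sqrt_tendsto : Filter.Tendsto (fun ε : ℝ => √ε) (nhdsWithin 0 (Set.Ioi 0)) (nhds 0) := by
  have : Filter.Tendsto (fun ε : ℝ => √ε) (nhds 0) (nhds (√0)) := Real.continuous_sqrt.tendsto 0
  rw [Real.sqrt_zero] at this
  exact this.mono_left nhdsWithin_le_nhds

lemma ev01 : ∀ᶠ ε : ℝ in nhdsWithin 0 (Set.Ioi 0), 0 < ε ∧ ε < 1 := by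
  filter_upwards [Ioo_mem_nhdsGT (zero_lt_one (α := ℝ))] with ε h using h

lemma FF_tendsto (d : ℕ) : Filter.Tendsto (fun ε => FF ε d) (nhdsWithin 0 (Set.Ioi 0))
    (nhds (Real.pi / 2 * ((ArithmeticFunction.moebius d : ℝ) / (d:ℝ) ^ 2))) := by
  rcases Nat.eq_zero_or_pos d with rfl | hd
  · simp [FF]
  have ev : ∀ᶠ ε : ℝ in nhdsWithin 0 (Set.Ioi 0), d ∈ Finset.Ioc 0 (NN ε) := by
    have hp : (0:ℝ) < 1 / d := by positivity
    filter_upwards [Ioo_mem_nhdsGT hp] with ε h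
    rw [Finset.mem_Ioc]
    refine ⟨hd, ?_⟩
    have h3 : (d:ℝ) ≤ 1 / ε := by
      rw [le_div_iff₀ h.1]
      have := h.2
      rw [lt_div_iff₀ (by positivity)] at this
      linarith
    exact_mod_cast h3.trans NN_ge
  have t : Filter.Tendsto (fun ε : ℝ => ∑ k ∈ Finset.Ioc 0 (NN ε),
      √ε * d * √(1 - (√ε * d * k) ^ 2)) (nhdsWithin 0 (Set.Ioi 0)) (nhds (Real.pi / 4)) := by
    refine tendsto_of_tendsto_of_tendsto_of_le_of_le'
      (g := fun ε => Real.pi / 4 - √ε * d) (h := fun _ => Real.pi / 4) ?_ tendsto_const_nhds ?_ ?_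
    · have := (sqrt_tendsto.mul_const (d:ℝ)).const_sub (Real.pi / 4)
      simpa using this
    · filter_upwards [ev01] with ε h using (riem' h.1 h.2 hd).1
    · filter_upwards [ev01] with ε h using (riem' h.1 h.2 hd).2
  have t2 := t.const_mul (2 * (ArithmeticFunction.moebius d : ℝ) / (d:ℝ) ^ 2)
  have e : 2 * (ArithmeticFunction.moebius d : ℝ) / (d:ℝ) ^ 2 * (Real.pi / 4) =
    Real.pi / 2 * ((ArithmeticFunction.moebius d : ℝ) / (d:ℝ) ^ 2) := by ring
  rw [e] at t2
  refine t2.congr' ?_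
  filter_upwards [ev, ev01] with ε h h' using (FF_eq h'.1 h).symm

lemma moeb_sum : ∑' d : ℕ, (ArithmeticFunction.moebius d : ℝ) / (d:ℝ) ^ 2 = 6 / Real.pi ^ 2 := by
  have h2 : (1:ℝ) < (2:ℂ).re := by norm_num
  have h := ArithmeticFunction.LSeries_zeta_mul_Lseries_moebius h2
  rw [ArithmeticFunction.LSeries_zeta_eq_riemannZeta h2, riemannZeta_two] at h
  have e : LSeries (fun n => ((ArithmeticFunction.moebius n : ℤ) : ℂ)) 2 =
      ((∑' d : ℕ, (ArithmeticFunction.moebius d : ℝ) / (d:ℝ) ^ 2 : ℝ) : ℂ) := by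
    rw [LSeries, Complex.ofReal_tsum]
    refine tsum_congr fun d => ?_
    rcases Nat.eq_zero_or_pos d with rfl | hd
    · simp
    · rw [LSeries.term_of_ne_zero hd.ne']
      push_cast
      norm_num
  rw [e] at h
  have h' : Real.pi ^ 2 / 6 * (∑' d : ℕ, (ArithmeticFunction.moebius d : ℝ) / (d:ℝ) ^ 2) = 1 := by
    exact_mod_cast h
  have := Real.pi_pos
  field_simp
  linarith

lemma MM_tendsto : Filter.Tendsto MM (nhdsWithin 0 (Set.Ioi 0)) (nhds (3 / Real.pi)) := by
  have hs : Summable (fun d : ℕ => Real.pi / 2 * (1 / (d:ℝ) ^ 2)) :=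
    (Real.summable_one_div_nat_pow.2 one_lt_two).mul_left _
  have := tendsto_tsum_of_dominated_convergence hs FF_tendsto
    (by filter_upwards [ev01] with ε h d using FF_bound h.1 h.2 d)
  rw [tsum_mul_left, moeb_sum] at this
  have e : Real.pi / 2 * (6 / Real.pi ^ 2) = 3 / Real.pi := by
    have := Real.pi_pos
    field_simp; norm_num
  rw [e] at this
  exact this.congr fun ε => (MM_tsum ε).symm

lemma err_tendsto {δ : ℝ} (hδ : 0 < δ) :
    Filter.Tendsto (fun ε : ℝ => 2 * ε ^ δ * (2 - Real.log ε) ^ 2)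
      (nhdsWithin 0 (Set.Ioi 0)) (nhds 0) := by
  have h1 := tendsto_log_mul_rpow_nhdsGT_zero (half_pos hδ)
  have h2 : Filter.Tendsto (fun ε : ℝ => ε ^ (δ / 2)) (nhdsWithin 0 (Set.Ioi 0)) (nhds 0) := by
    have := (Real.continuousAt_rpow_const 0 (δ / 2) (Or.inr (half_pos hδ).le)).tendsto
    rw [Real.zero_rpow (half_pos hδ).ne'] at this
    exact this.mono_left nhdsWithin_le_nhds
  have h3 := (((h2.const_mul 2).sub h1).pow 2).const_mul 2
  simp only [mul_zero, sub_zero, ne_eq, OfNat.ofNat_ne_zero, not_false_eq_true, zero_pow] at h3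
  refine h3.congr' ?_
  filter_upwards [ev01] with ε h
  have : ε ^ δ = (ε ^ (δ / 2)) ^ 2 := by
    rw [← Real.rpow_natCast, ← Real.rpow_mul h.1.le]; norm_num
  rw [this]; ring

lemma rpow_tendsto {δ : ℝ} (hδ : 0 < δ) :
    Filter.Tendsto (fun ε : ℝ => ε ^ δ) (nhdsWithin 0 (Set.Ioi 0)) (nhds 0) := by
  have := (Real.continuousAt_rpow_const 0 δ (Or.inr hδ.le)).tendsto
  rw [Real.zero_rpow hδ.ne'] at this
  exact this.mono_left nhdsWithin_le_nhds

theorem fordSet_shrinking_intervals_density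
    (δ : ℝ) (hδ : 0 < δ) (α β : ℝ → ℝ)
    (hαβ : ∀ ε : ℝ, ε ∈ Set.Ioo (0 : ℝ) 1 → ε ^ ((1 : ℝ) / 2 - δ) ≤ β ε - α ε) :
    Filter.Tendsto
      (fun ε : ℝ => (volume (fordSetAB α β ε)).toReal / (β ε - α ε))
      (nhdsWithin 0 (Set.Ioi 0)) (nhds (3 / Real.pi)) := by
  have key : ∀ ε : ℝ, 0 < ε → ε < 1 → 0 < β ε - α ε ∧ √ε ≤ ε ^ δ * (β ε - α ε) := by
    intro ε h0 h1
    have h := hαβ ε ⟨h0, h1⟩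
    have hp : 0 < ε ^ ((1 : ℝ) / 2 - δ) := Real.rpow_pos_of_pos h0 _
    refine ⟨by linarith, ?_⟩
    have e : √ε = ε ^ δ * ε ^ ((1 : ℝ) / 2 - δ) := by
      rw [← Real.rpow_add h0, Real.sqrt_eq_rpow]; congr 1; ring
    rw [e]
    have := Real.rpow_pos_of_pos h0 δ
    gcongr
  have tt : Filter.Tendsto (fun ε : ℝ => √ε / (β ε - α ε)) (nhdsWithin 0 (Set.Ioi 0)) (nhds 0) := by
    refine squeeze_zero' ?_ ?_ (rpow_tendsto hδ)
    · filter_upwards [ev01] with ε h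
      have := (key ε h.1 h.2).1
      positivity
    · filter_upwards [ev01] with ε h
      rw [div_le_iff₀ (key ε h.1 h.2).1]
      exact (key ε h.1 h.2).2
  have bd : ∀ ε : ℝ, 0 < ε → ε < 1 → ∀ c : ℝ, α ε - c * √ε ≤ β ε + c * √ε →
      |SS ε (α ε - c * √ε) (β ε + c * √ε) / (β ε - α ε) -
        MM ε * (1 + 2 * c * (√ε / (β ε - α ε)))| ≤ 2 * ε ^ δ * (2 - Real.log ε) ^ 2 := by
    intro ε h0 h1 c hc
    obtain ⟨hL, hs⟩ := key ε h0 h1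
    have hb := SS_bound h0 h1 hc
    have e : SS ε (α ε - c * √ε) (β ε + c * √ε) / (β ε - α ε) -
        MM ε * (1 + 2 * c * (√ε / (β ε - α ε))) =
        (SS ε (α ε - c * √ε) (β ε + c * √ε) -
          MM ε * (β ε + c * √ε - (α ε - c * √ε))) / (β ε - α ε) := by
      field_simp; ring
    rw [e, abs_div, abs_of_pos hL, div_le_iff₀ hL]
    refine hb.trans ?_
    calc _ ≤ 2 * (ε ^ δ * (β ε - α ε)) * (2 - Real.log ε) ^ 2 := by gcongr
      _ = _ := by ring
  have lim : ∀ c : ℝ, Filter.Tendsto (fun ε => MM ε * (1 + 2 * c * (√ε / (β ε - α ε))))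
      (nhdsWithin 0 (Set.Ioi 0)) (nhds (3 / Real.pi)) := by
    intro c
    have := MM_tendsto.mul ((tt.const_mul (2 * c)).const_add 1)
    simpa using this
  have lo := (lim (-1)).sub (err_tendsto hδ)
  have hi := (lim 1).add (err_tendsto hδ)
  rw [sub_zero] at lo
  rw [add_zero] at hi
  refine tendsto_of_tendsto_of_tendsto_of_le_of_le' lo hi ?_ ?_
  · filter_upwards [ev01, tt.eventually (gt_mem_nhds (by norm_num : (0:ℝ) < 1 / 2))] with ε h h2
    have hL := (key ε h.1 h.2).1
    rw [div_lt_iff₀ hL] at h2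
    have b := (abs_le.1 (bd ε h.1 h.2 (-1) (by linarith))).1
    have l := lower h.1 α β
    have e1 : α ε - (-1) * √ε = α ε + √ε := by ring
    have e2 : β ε + (-1) * √ε = β ε - √ε := by ring
    rw [e1, e2] at b
    have := div_le_div_of_nonneg_right l hL.le
    linarith
  · filter_upwards [ev01] with ε h
    have hL := (key ε h.1 h.2).1
    have sp := Real.sqrt_nonneg ε
    have b := (abs_le.1 (bd ε h.1 h.2 1 (by linarith))).2
    have l := upper h.1 h.2 α β
    rw [one_mul] at b
    have := div_le_div_of_nonneg_right l hL.le
    linarith
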